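/- Let q be a power of a prime p, let k be a positive integer with k ≡ 2 (mod 4), k > 2 and gcd(k/2, q−1) = 1, let a ∈ F_q^*, and let D = {x ∈ F_{q^k} : Tr_{q^2/q}(x^{(q^k−1)/(q^2−1)}) + a = 0}. Then #{b ∈ F_{q^k}^* : w(c_b) = (q^k − q^{k/2 − 1})/(q+1)} = q(q^k − 1)/(q+1) and #{b ∈ F_{q^k}^* : w(c_b) = (q^k + q^{k/2})/(q+1)} = (q^k − 1)/(q+1); in particular every nonzero codeword of C_D has one of these two weights, C_D has length q(q^k−1)/(q²−1), dimension k, and minimum distance (q^k − q^{k/2 − 1})/(q+1). -/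

import Mathlib

/-!
Write `K = F_q`, `F = F_{q²}`, `E = F_{q^k}`, `h = k / 2`, and let `L` be the subfield of `E` with
`q ^ h` elements. Since `h` is odd, `x ^ (q ^ h) = -x` forces `N(x) ^ q = -N(x)` for the norm `N`
of `E / F`: elements of trace zero over `L` have a norm of trace zero over `K`. Applied to `b * d`
with `b, d ≠ 0` and `Tr_{E/L} (b * d) = 0`, this gives `Tr_{F/K} N(d) = 0 ↔ N(b) ∈ K`. So the
cone `Z = {d | Tr_{F/K} N(d) = 0}` meets the `L`-line `{d | Tr_{E/L} (b * d) = 0}` either in the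
whole line or only in `0`, according to whether `N(b) ∈ K`.

This determines all the weights. The cone `Z` is stable under `Lˣ`, so the number of `d ∈ Z` with
`Tr_{E/K} (b * d) ≠ 0` is a fixed proportion of the number of `d ∈ Z` with `Tr_{E/L} (b * d) ≠ 0`.
Scaling by `c ∈ Kˣ` multiplies `Tr_{F/K} N(d)` by `c ^ h`, and `c ↦ c ^ h` is a bijection of `Kˣ`,
so on `{d | Tr_{E/K} (b * d) ≠ 0}` all the nonzero values of `Tr_{F/K} N(d)` are taken equally
often.
-/

section Counting

theorem natCast_natCard_units (G : Type*) [GroupWithZero G] [Finite G] :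
    (Nat.card Gˣ : ℚ) = Nat.card G - 1 := by
  rw [Nat.card_eq_card_units_add_one G, Nat.cast_add_one, add_sub_cancel_right]

variable {X Y : Type*}

theorem ncard_sep_add_ncard_sep_not [Finite X] (S : Set X) (P : X → Prop) :
    {x ∈ S | P x}.ncard + {x ∈ S | ¬ P x}.ncard = S.ncard :=
  Set.ncard_inter_add_ncard_sdiff_eq_ncard S {x | P x}

theorem ncard_sep_mem_eq_mul [Finite X] [Finite Y] {f : X → Y} {S : Set X} {A : Set Y} {n : ℕ}
    (h : ∀ y ∈ A, {x ∈ S | f x = y}.ncard = n) : {x ∈ S | f x ∈ A}.ncard = A.ncard * n := by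
  classical
  have := Fintype.ofFinite X
  have := Fintype.ofFinite Y
  have hfib : ∀ y ∈ A.toFinset, ({x ∈ {x ∈ S | f x ∈ A}.toFinset | f x = y}).card = n := by
    intro y hy
    rw [Set.mem_toFinset] at hy
    rw [← h y hy, Set.ncard_eq_toFinset_card']
    congr 1
    ext x
    simp only [Finset.mem_filter, Set.mem_toFinset, Set.mem_ofPred_eq]
    grind
  rw [Set.ncard_eq_toFinset_card', Set.ncard_eq_toFinset_card',
    Finset.card_eq_sum_card_fiberwise (f := f) (t := A.toFinset)
      (fun x hx => by simp only [Set.coe_toFinset, Set.mem_ofPred_eq] at hx ⊢; exact hx.2),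
    Finset.sum_congr rfl hfib, Finset.sum_const, smul_eq_mul]

theorem ncard_mul_ncard_sep_mem [Finite X] [Finite Y] {f : X → Y} {S : Set X} {A B : Set Y}
    (hAB : A ⊆ B)
    (h : ∀ y ∈ B, ∀ z ∈ B, {x ∈ S | f x = y}.ncard ≤ {x ∈ S | f x = z}.ncard) :
    B.ncard * {x ∈ S | f x ∈ A}.ncard = A.ncard * {x ∈ S | f x ∈ B}.ncard := by
  obtain rfl | ⟨z, hz⟩ := B.eq_empty_or_nonempty
  · simp [Set.subset_empty_iff.1 hAB]
  have hfib : ∀ y ∈ B, {x ∈ S | f x = y}.ncard = {x ∈ S | f x = z}.ncard :=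
    fun y hy => (h y hy z hz).antisymm (h z hz y hy)
  rw [ncard_sep_mem_eq_mul hfib, ncard_sep_mem_eq_mul fun y hy => hfib y (hAB hy),
    Nat.mul_left_comm]

theorem natCard_mul_ncard_preimage [AddGroup X] [AddGroup Y] [Finite X] {Φ : Type*}
    [FunLike Φ X Y] [AddMonoidHomClass Φ X Y] {f : Φ} (hf : Function.Surjective f) (A : Set Y) :
    Nat.card Y * {x | f x ∈ A}.ncard = A.ncard * Nat.card X := by
  have := Finite.of_surjective f hf
  have h := ncard_mul_ncard_sep_mem (f := f) (S := Set.univ) (Set.subset_univ A) (by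
    intro y _ z _
    obtain ⟨u, hu⟩ := hf (z - y)
    refine Set.ncard_le_ncard_of_injOn (u + ·) ?_ (add_right_injective u).injOn
    rintro x ⟨-, hx⟩
    exact ⟨trivial, by rw [map_add, hu, hx, sub_add_cancel]⟩)
  simpa using h

theorem natCard_units_mul_ncard_sep_mem {K : Type*} [GroupWithZero K] [Finite K]
    [Finite X] [MulAction Kˣ X] {n : ℕ} (hn : (Nat.card Kˣ).Coprime n) {f : X → K}
    (hf : ∀ (c : Kˣ) x, f (c • x) = (c : K) ^ n * f x) {S : Set X}
    (hS : ∀ c : Kˣ, ∀ x ∈ S, c • x ∈ S) {A : Set K} (hA : 0 ∉ A) :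
    Nat.card Kˣ * {x ∈ S | f x ∈ A}.ncard = A.ncard * {x ∈ S | f x ≠ 0}.ncard := by
  have h := ncard_mul_ncard_sep_mem (f := f) (S := S) (Set.subset_compl_singleton_iff.2 hA) (by
    intro y hy z hz
    rw [Set.mem_compl_singleton_iff] at hy hz
    obtain ⟨c, hc⟩ := (powCoprime hn).surjective (Units.mk0 z hz / Units.mk0 y hy)
    have hcz : (c : K) ^ n * y = z := by
      rw [← Units.val_pow_eq_pow_val, show c ^ n = _ from hc, Units.val_div_eq_div_val,
        Units.val_mk0, Units.val_mk0, div_mul_cancel₀ z hy]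
    refine Set.ncard_le_ncard_of_injOn (c • ·) ?_ (MulAction.injective c).injOn
    rintro x ⟨hxS, hx⟩
    exact ⟨hS c x hxS, by rw [hf, hx, hcz]⟩)
  rwa [Set.ncard_compl, Set.ncard_singleton, ← Nat.card_units] at h

end Counting

section FiniteFieldExtension

open Module

theorem exists_intermediateField_finrank_eq_prime (K : Type*) {E : Type*} [Field K] [Field E]
    [Algebra K E] [FiniteDimensional K E] [IsGalois K E] {p : ℕ} [Fact p.Prime]
    (hp : p ∣ finrank K E) : ∃ L : IntermediateField K E, finrank L E = p := by
  obtain ⟨σ, hσ⟩ := exists_prime_orderOf_dvd_card' (G := Gal(E/K)) p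
    (by rwa [IsGalois.card_aut_eq_finrank])
  exact ⟨IntermediateField.fixedField (Subgroup.zpowers σ),
    by rw [IntermediateField.finrank_fixedField_eq_card, Nat.card_zpowers, hσ]⟩

variable {K F L E : Type*} [Field K] [Field F] [Field L] [Field E]
  [Algebra K F] [Algebra K L] [Algebra F E] [Algebra L E]

theorem finrank_eq_of_natCard_eq_natCard_pow {V : Type*} [AddCommGroup V] [Module K V]
    [Module.Finite K V] [Finite K] {n : ℕ} (h : Nat.card V = Nat.card K ^ n) :
    finrank K V = n :=
  Nat.pow_right_injective Finite.one_lt_card (natCard_eq_pow_finrank.symm.trans h)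

theorem pow_natCard_pow [Finite K] (x : K) (n : ℕ) : x ^ Nat.card K ^ n = x := by
  have := Fintype.ofFinite K
  rw [Nat.card_eq_fintype_card, FiniteField.pow_card_pow]

theorem pow_natCard_eq_self_iff_mem_range [Finite F] {y : F} :
    y ^ Nat.card K = y ↔ y ∈ Set.range (algebraMap K F) := by
  have := Finite.of_injective _ (algebraMap K F).injective
  have := Fintype.ofFinite K
  rw [IsGalois.mem_range_algebraMap_iff_fixed, Nat.card_eq_fintype_card]
  refine ⟨fun hy σ => ?_, fun hy => hy (FiniteField.frobeniusAlgEquivOfAlgebraic K F)⟩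
  obtain ⟨i, rfl⟩ := (FiniteField.bijective_frobeniusAlgEquivOfAlgebraic_pow K F).surjective σ
  rw [AlgEquiv.coe_pow]
  exact (Function.IsFixedPt.iterate hy i :)

theorem trace_eq_zero_iff_pow_natCard_eq_neg [Finite F] (hF : finrank K F = 2) {y : F} :
    Algebra.trace K F y = 0 ↔ y ^ Nat.card K = -y := by
  rw [← map_eq_zero (algebraMap K F), FiniteField.algebraMap_trace_eq_sum_pow, hF,
    Finset.sum_range_succ, Finset.sum_range_one, pow_zero, pow_one, pow_one, add_comm,
    add_eq_zero_iff_eq_neg]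

theorem pow_natCard_pow_of_odd [Finite F] (hF : finrank K F = 2) (y : F) {n : ℕ} (hn : Odd n) :
    y ^ Nat.card K ^ n = y ^ Nat.card K := by
  obtain ⟨m, rfl⟩ := hn
  rw [pow_succ, pow_mul (Nat.card K), ← hF, ← natCard_eq_pow_finrank, pow_mul, pow_natCard_pow]

theorem finrank_eq_of_finrank_eq_two [Algebra K E] [IsScalarTower K F E] [IsScalarTower K L E]
    (hF : finrank K F = 2) (hL : finrank L E = 2) : finrank K L = finrank F E := by
  have h := (finrank_mul_finrank K L E).trans (finrank_mul_finrank K F E).symm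
  rw [hF, hL] at h
  omega

theorem trace_norm_smul [Algebra K E] [IsScalarTower K F E] (c : K) (x : E) :
    Algebra.trace K F (Algebra.norm F (c • x)) =
      c ^ finrank F E * Algebra.trace K F (Algebra.norm F x) := by
  rw [Algebra.smul_def, map_mul, IsScalarTower.algebraMap_apply K F E, Algebra.norm_algebraMap,
    ← map_pow, ← Algebra.smul_def, map_smul, smul_eq_mul]

variable [Finite E]

theorem natCard_eq_pow_finrank_sq_of_finrank_eq_two (hF : finrank K F = 2) :
    Nat.card E = (Nat.card K ^ finrank F E) ^ 2 := by
  have : Finite F := .of_injective _ (algebraMap F E).injective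
  rw [natCard_eq_pow_finrank (K := F), natCard_eq_pow_finrank (K := K) (V := F), hF,
    pow_right_comm]

theorem norm_pow_natCard (hF : finrank K F = 2) (hL : Odd (finrank K L)) (x : E) :
    Algebra.norm F x ^ Nat.card K = Algebra.norm F (x ^ Nat.card L) := by
  have : Finite F := .of_injective _ (algebraMap F E).injective
  have : Finite L := .of_injective _ (algebraMap L E).injective
  rw [map_pow, natCard_eq_pow_finrank (K := K) (V := L), pow_natCard_pow_of_odd hF _ hL]

theorem norm_algebraMap_mem_range (hF : finrank K F = 2) (hL : Odd (finrank K L)) (c : L) :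
    Algebra.norm F (algebraMap L E c) ∈ Set.range (algebraMap K F) := by
  have : Finite F := .of_injective _ (algebraMap F E).injective
  have : Finite L := .of_injective _ (algebraMap L E).injective
  have := Fintype.ofFinite L
  rw [← pow_natCard_eq_self_iff_mem_range, norm_pow_natCard hF hL, ← map_pow,
    Nat.card_eq_fintype_card, FiniteField.pow_card]

theorem trace_norm_smul_eq_zero (hF : finrank K F = 2) (hL : Odd (finrank K L)) (c : L) {x : E}
    (hx : Algebra.trace K F (Algebra.norm F x) = 0) :
    Algebra.trace K F (Algebra.norm F (c • x)) = 0 := by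
  obtain ⟨k, hk⟩ := norm_algebraMap_mem_range (E := E) hF hL c
  rw [Algebra.smul_def, map_mul, ← hk, ← Algebra.smul_def, map_smul, hx, smul_zero]

variable [Algebra K E]

theorem trace_norm_eq_zero_of_trace_eq_zero [IsScalarTower K F E] [IsScalarTower K L E]
    (hF : finrank K F = 2) (hL : finrank L E = 2) (hE : Odd (finrank F E)) {x : E}
    (hx : Algebra.trace L E x = 0) : Algebra.trace K F (Algebra.norm F x) = 0 := by
  have : Finite F := .of_injective _ (algebraMap F E).injective
  have hKL : Odd (finrank K L) := by rwa [finrank_eq_of_finrank_eq_two hF hL]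
  have hneg : Algebra.norm F (-1 : E) = -1 := by
    rw [← map_one (algebraMap F E), ← map_neg, Algebra.norm_algebraMap, hE.neg_one_pow]
  rw [trace_eq_zero_iff_pow_natCard_eq_neg hL] at hx
  rw [trace_eq_zero_iff_pow_natCard_eq_neg hF, norm_pow_natCard hF hKL, hx, ← neg_one_mul x,
    map_mul, hneg, neg_one_mul]

theorem trace_norm_eq_zero_iff_norm_mem_range [IsScalarTower K F E] [IsScalarTower K L E]
    (hF : finrank K F = 2) (hL : finrank L E = 2) (hE : Odd (finrank F E)) {b d : E}
    (hb : b ≠ 0) (hd : d ≠ 0) (hbd : Algebra.trace L E (b * d) = 0) :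
    Algebra.trace K F (Algebra.norm F d) = 0 ↔
      Algebra.norm F b ∈ Set.range (algebraMap K F) := by
  have : Finite F := .of_injective _ (algebraMap F E).injective
  have hb' : Algebra.norm F b ≠ 0 := Algebra.norm_ne_zero_iff.2 hb
  have hd' : Algebra.norm F d ≠ 0 := Algebra.norm_ne_zero_iff.2 hd
  have h := trace_norm_eq_zero_of_trace_eq_zero hF hL hE hbd
  rw [trace_eq_zero_iff_pow_natCard_eq_neg hF, map_mul, mul_pow] at h
  rw [trace_eq_zero_iff_pow_natCard_eq_neg hF, ← pow_natCard_eq_self_iff_mem_range]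
  constructor <;> intro h'
  · rw [h'] at h
    exact mul_right_cancel₀ hd' (by linear_combination -h)
  · rw [h'] at h
    exact mul_left_cancel₀ hb' (by linear_combination h)

end FiniteFieldExtension

section TraceNormCounts

open Module

variable {K F E : Type*} [Field K] [Field F] [Field E] [Finite E]
  [Algebra K F] [Algebra F E]

theorem natCard_mul_ncard_trace_mul_mem [Algebra K E] {b : E} (hb : b ≠ 0) (A : Set K) :
    Nat.card K * {x : E | Algebra.trace K E (b * x) ∈ A}.ncard = A.ncard * Nat.card E := by
  have hne : Algebra.traceForm K E b ≠ 0 := fun h =>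
    hb ((traceForm_nondegenerate K E).1 b (LinearMap.congr_fun h))
  exact natCard_mul_ncard_preimage (LinearMap.surjective hne) A

theorem natCard_mul_ncard_trace_mul_ne_zero [Algebra K E] {b : E} (hb : b ≠ 0) :
    Nat.card K * {x : E | Algebra.trace K E (b * x) ≠ 0}.ncard = Nat.card Kˣ * Nat.card E := by
  have : Finite K := .of_injective _ (algebraMap K E).injective
  have h := natCard_mul_ncard_trace_mul_mem hb ({0}ᶜ : Set K)
  rwa [Set.ncard_compl, Set.ncard_singleton, ← Nat.card_units] at h

theorem natCard_mul_ncard_trace_mul_eq_zero [Algebra K E] {b : E} (hb : b ≠ 0) :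
    Nat.card K * {x : E | Algebra.trace K E (b * x) = 0}.ncard = Nat.card E := by
  have h := natCard_mul_ncard_trace_mul_mem hb ({0} : Set K)
  rwa [Set.ncard_singleton, one_mul] at h

theorem ncard_trace_mul_eq_zero_of_finrank_eq_two (hF : finrank F E = 2) {b : E} (hb : b ≠ 0) :
    {x : E | Algebra.trace F E (b * x) = 0}.ncard = Nat.card F := by
  have : Finite F := .of_injective _ (algebraMap F E).injective
  have h := natCard_mul_ncard_trace_mul_eq_zero (K := F) hb
  rw [natCard_eq_pow_finrank (K := F) (V := E), hF, sq] at h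
  exact Nat.eq_of_mul_eq_mul_left Nat.card_pos h

theorem natCard_mul_natCard_units_mul_ncard_sep_trace_mul_ne_zero {L : Type*} [Field L]
    [Algebra K L] [Algebra L E] [Algebra K E] [IsScalarTower K L E] {S : Set E}
    (hS : ∀ c : Lˣ, ∀ x ∈ S, c • x ∈ S) (b : E) :
    Nat.card K * (Nat.card Lˣ * {x ∈ S | Algebra.trace K E (b * x) ≠ 0}.ncard) =
      Nat.card Kˣ * Nat.card L * {x ∈ S | Algebra.trace L E (b * x) ≠ 0}.ncard := by
  have : Finite L := .of_injective _ (algebraMap L E).injective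
  have htrace (x : E) : Algebra.trace K E (b * x) =
      Algebra.trace K L (1 * Algebra.trace L E (b * x)) := by
    rw [one_mul, Algebra.trace_trace]
  have h := natCard_units_mul_ncard_sep_mem (n := 1) (Nat.coprime_one_right _)
    (f := fun x : E => Algebra.trace L E (b * x)) (fun c x => by
      rw [pow_one, Units.smul_def, mul_smul_comm, map_smul, smul_eq_mul])
    hS (A := {y : L | Algebra.trace K L (1 * y) ≠ 0}) (by simp)
  simp only [Set.mem_ofPred_eq, ← htrace] at h
  rw [h, ← mul_assoc, natCard_mul_ncard_trace_mul_ne_zero one_ne_zero]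

theorem natCard_units_mul_ncard_norm_mem {A : Set F} (hA : 0 ∉ A) :
    Nat.card Fˣ * {x : E | Algebra.norm F x ∈ A}.ncard = A.ncard * Nat.card Eˣ := by
  have : Finite F := .of_injective _ (algebraMap F E).injective
  have h := ncard_mul_ncard_sep_mem (f := Algebra.norm F) (S := (Set.univ : Set E))
    (Set.subset_compl_singleton_iff.2 hA) (by
      intro y hy z hz
      rw [Set.mem_compl_singleton_iff] at hy hz
      obtain ⟨u, hu⟩ := FiniteField.norm_surjective F E (z / y)
      have hu0 : u ≠ 0 := Algebra.norm_ne_zero_iff.1 (hu ▸ div_ne_zero hz hy)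
      refine Set.ncard_le_ncard_of_injOn (u * ·) ?_ (mul_right_injective₀ hu0).injOn
      rintro x ⟨-, hx⟩
      exact ⟨trivial, by rw [map_mul, hu, hx, div_mul_cancel₀ z hy]⟩)
  have hne : {x ∈ (Set.univ : Set E) | Algebra.norm F x ∈ ({0}ᶜ : Set F)} = {0}ᶜ := by
    ext x
    simp [Algebra.norm_eq_zero_iff]
  rw [hne, Set.ncard_compl, Set.ncard_compl, Set.ncard_singleton, Set.ncard_singleton,
    ← Nat.card_units, ← Nat.card_units] at h
  simpa only [Set.mem_univ, true_and] using h

theorem natCard_add_one_mul_ncard_norm_mem (hF : finrank K F = 2) {A : Set F} (hA : 0 ∉ A)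
    (hcard : A.ncard = Nat.card Kˣ) :
    (Nat.card K + 1) * {x : E | Algebra.norm F x ∈ A}.ncard = Nat.card Eˣ := by
  have : Finite F := .of_injective _ (algebraMap F E).injective
  have : Finite K := .of_injective _ (algebraMap K F).injective
  have hF_units : Nat.card Fˣ = Nat.card Kˣ * (Nat.card K + 1) := by
    rw [Nat.card_units, Nat.card_units, natCard_eq_pow_finrank (K := K), hF, mul_comm,
      ← Nat.sq_sub_sq, one_pow]
  have h := natCard_units_mul_ncard_norm_mem (E := E) hA
  rw [hcard, hF_units, mul_assoc] at h
  exact Nat.eq_of_mul_eq_mul_left Nat.card_pos h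

theorem natCard_add_one_mul_ncard_norm_mem_range (hF : finrank K F = 2) :
    (Nat.card K + 1) *
      {x : E | x ≠ 0 ∧ Algebra.norm F x ∈ Set.range (algebraMap K F)}.ncard = Nat.card Eˣ := by
  have : Finite F := .of_injective _ (algebraMap F E).injective
  have hcard : (Set.range (algebraMap K F) \ {0}).ncard = Nat.card Kˣ := by
    have h0 : (0 : F) ∈ Set.range (algebraMap K F) := ⟨0, map_zero _⟩
    rw [Set.ncard_sdiff_singleton_of_mem h0,
      Set.ncard_range_of_injective (algebraMap K F).injective, Nat.card_units]
  rw [← natCard_add_one_mul_ncard_norm_mem (E := E) hF (by simp) hcard]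
  congr 2
  ext x
  simp [and_comm, Algebra.norm_eq_zero_iff]

theorem natCard_add_one_mul_ncard_trace_norm_eq_zero (hF : finrank K F = 2) :
    (Nat.card K + 1) * {x : E | Algebra.trace K F (Algebra.norm F x) = 0}.ncard =
      Nat.card E + Nat.card K := by
  have : Finite F := .of_injective _ (algebraMap F E).injective
  have hcard : ({y : F | Algebra.trace K F y = 0} \ {0}).ncard = Nat.card Kˣ := by
    have h0 : (0 : F) ∈ {y : F | Algebra.trace K F y = 0} := map_zero _
    have hker := ncard_trace_mul_eq_zero_of_finrank_eq_two hF (one_ne_zero (α := F))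
    simp only [one_mul] at hker
    rw [Set.ncard_sdiff_singleton_of_mem h0, hker, Nat.card_units]
  have hunits := natCard_add_one_mul_ncard_norm_mem (E := E) hF (by simp) hcard
  have hsdiff : {x : E | Algebra.norm F x ∈ {y : F | Algebra.trace K F y = 0} \ {0}} =
      {x : E | Algebra.trace K F (Algebra.norm F x) = 0} \ {0} := by
    ext x
    simp [Algebra.norm_eq_zero_iff]
  have h0 : (0 : E) ∈ {x : E | Algebra.trace K F (Algebra.norm F x) = 0} := by
    simp [Algebra.norm_zero]
  rw [hsdiff] at hunits
  rw [← Set.ncard_sdiff_singleton_add_one h0, mul_add_one, hunits,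
    Nat.card_eq_card_units_add_one E]
  ring

variable {L : Type*} [Field L] [Algebra K L] [Algebra K E] [Algebra L E]
  [IsScalarTower K F E] [IsScalarTower K L E]

open Classical in
theorem ncard_trace_norm_eq_zero_and_trace_mul_eq_zero (hF : finrank K F = 2)
    (hL : finrank L E = 2) (hE : Odd (finrank F E)) {b : E} (hb : b ≠ 0) :
    {d : E | Algebra.trace K F (Algebra.norm F d) = 0 ∧ Algebra.trace L E (b * d) = 0}.ncard =
      if Algebra.norm F b ∈ Set.range (algebraMap K F) then Nat.card L else 1 := by
  have hiff {d : E} (hd : d ≠ 0) (hbd : Algebra.trace L E (b * d) = 0) :=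
    trace_norm_eq_zero_iff_norm_mem_range (K := K) hF hL hE hb hd hbd
  split_ifs with hbK
  · rw [← ncard_trace_mul_eq_zero_of_finrank_eq_two hL hb]
    congr 1 with d
    obtain rfl | hd := eq_or_ne d 0
    · simp [Algebra.norm_zero]
    · exact and_iff_right_of_imp fun hbd => (hiff hd hbd).2 hbK
  · rw [Set.ncard_eq_one]
    refine ⟨0, Set.eq_singleton_iff_unique_mem.2 ⟨by simp [Algebra.norm_zero], ?_⟩⟩
    rintro d ⟨hd, hbd⟩
    by_contra hd0
    exact hbK ((hiff hd0 hbd).1 hd)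

open Classical in
theorem natCard_add_one_mul_ncard_trace_norm_eq_zero_and_trace_mul_ne_zero
    (hF : finrank K F = 2) (hL : finrank L E = 2) (hE : Odd (finrank F E)) {b : E} (hb : b ≠ 0) :
    ((Nat.card K : ℚ) + 1) * {d : E | Algebra.trace K F (Algebra.norm F d) = 0 ∧
        Algebra.trace L E (b * d) ≠ 0}.ncard =
      Nat.card Lˣ * (Nat.card L + 1 -
        if Algebra.norm F b ∈ Set.range (algebraMap K F) then (Nat.card K : ℚ) + 1 else 0) := by
  have : Finite L := .of_injective _ (algebraMap L E).injective
  have hE_card : Nat.card E = Nat.card L ^ 2 := by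
    rw [natCard_eq_pow_finrank (K := L) (V := E), hL]
  have hZ := natCard_add_one_mul_ncard_trace_norm_eq_zero (E := E) hF
  have hsplit := ncard_sep_add_ncard_sep_not
    {d : E | Algebra.trace K F (Algebra.norm F d) = 0} fun d => Algebra.trace L E (b * d) = 0
  simp only [Set.mem_ofPred_eq] at hsplit
  rw [ncard_trace_norm_eq_zero_and_trace_mul_eq_zero hF hL hE hb] at hsplit
  rw [← hsplit, hE_card] at hZ
  rw [natCast_natCard_units]
  split_ifs at hZ ⊢ <;>
  · push_cast [← @Nat.cast_inj ℚ] at hZ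
    linear_combination hZ

end TraceNormCounts

section TraceCode

open Module

variable {K F E : Type*} [Field K] [Field F] [Field E] [Algebra K F] [Algebra F E] [Algebra K E]

/-- The set `D` of those `x : E` with `Tr_{F/K} (N_{E/F} x) + a = 0`. For finite fields,
`N_{E/F} x` is the power of `x` with exponent `(|E| - 1) / (|F| - 1)`. -/
def definingSet (K F E : Type*) [Field K] [Field F] [Field E] [Algebra K F] [Algebra F E]
    (a : K) : Set E :=
  {x | Algebra.trace K F (Algebra.norm F x) + a = 0}

/-- The Hamming weight of the codeword `(Tr_{E/K} (b * d))` indexed by `d ∈ D`. -/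
noncomputable def traceCodeWeight (K : Type*) {E : Type*} [Field K] [Field E] [Algebra K E]
    (D : Set E) (b : E) : ℕ :=
  {d ∈ D | Algebra.trace K E (b * d) ≠ 0}.ncard

theorem injective_trace_mul_of_traceCodeWeight_ne_zero {D : Set E}
    (hD : ∀ b ≠ 0, traceCodeWeight K D b ≠ 0) :
    Function.Injective fun (b : E) (d : D) => Algebra.trace K E (b * d) := by
  intro b c hbc
  by_contra hne
  refine hD (b - c) (sub_ne_zero.2 hne) ?_
  have hempty : {d ∈ D | Algebra.trace K E ((b - c) * d) ≠ 0} = ∅ := by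
    refine Set.eq_empty_of_forall_notMem fun d hd => hd.2 ?_
    rw [sub_mul, map_sub, sub_eq_zero]
    exact congrFun hbc ⟨d, hd.1⟩
  rw [traceCodeWeight, hempty, Set.ncard_empty]

variable [IsScalarTower K F E] [Finite E]

theorem natCard_units_mul_ncard_definingSet_sep (hn : (Nat.card Kˣ).Coprime (finrank F E))
    {a : K} (ha : a ≠ 0) {S : Set E} (hS : ∀ c : Kˣ, ∀ x ∈ S, c • x ∈ S) :
    Nat.card Kˣ * {x ∈ definingSet K F E a | x ∈ S}.ncard =
      {x ∈ S | Algebra.trace K F (Algebra.norm F x) ≠ 0}.ncard := by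
  have : Finite K := .of_injective _ (algebraMap K E).injective
  have h := natCard_units_mul_ncard_sep_mem hn
    (f := fun x : E => Algebra.trace K F (Algebra.norm F x)) (fun c x => trace_norm_smul (c : K) x)
    hS (A := {-a}) (by simpa using ha)
  have hmem : {x ∈ S | Algebra.trace K F (Algebra.norm F x) ∈ ({-a} : Set K)} =
      {x ∈ definingSet K F E a | x ∈ S} := by
    ext x
    simp [definingSet, add_eq_zero_iff_eq_neg, and_comm]
  rwa [hmem, Set.ncard_singleton, one_mul] at h

theorem ncard_definingSet (hF : finrank K F = 2) (hn : (Nat.card Kˣ).Coprime (finrank F E))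
    {a : K} (ha : a ≠ 0) :
    ((definingSet K F E a).ncard : ℚ) =
      Nat.card K * (Nat.card E - 1) / ((Nat.card K : ℚ) ^ 2 - 1) := by
  have : Finite K := .of_injective _ (algebraMap K E).injective
  have hq : (1 : ℚ) < Nat.card K := mod_cast Finite.one_lt_card
  have hZ := natCard_add_one_mul_ncard_trace_norm_eq_zero (E := E) hF
  have hD := natCard_units_mul_ncard_definingSet_sep hn ha (S := Set.univ) fun _ _ _ => trivial
  have hsplit := ncard_sep_add_ncard_sep_not (Set.univ : Set E)
    fun x => Algebra.trace K F (Algebra.norm F x) = 0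
  simp only [Set.mem_univ, true_and, and_true, Set.ncard_univ, Set.ofPred_mem_eq] at hD hsplit
  rw [← @Nat.cast_inj ℚ] at hZ hD hsplit
  push_cast [natCast_natCard_units] at hZ hD hsplit
  rw [eq_div_iff (by nlinarith)]
  linear_combination (Nat.card K + 1 : ℚ) * (hD + hsplit) - hZ

open Classical in
theorem ncard_trace_norm_eq_zero_and_trace_mul_ne_zero (hF : finrank K F = 2)
    (hE : Odd (finrank F E)) {b : E} (hb : b ≠ 0) :
    (Nat.card K : ℚ) * (Nat.card K + 1) *
        {d : E | Algebra.trace K F (Algebra.norm F d) = 0 ∧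
          Algebra.trace K E (b * d) ≠ 0}.ncard =
      Nat.card Kˣ * Nat.card K ^ finrank F E * (Nat.card K ^ finrank F E + 1 -
        if Algebra.norm F b ∈ Set.range (algebraMap K F) then (Nat.card K : ℚ) + 1 else 0) := by
  obtain ⟨L, hL⟩ := exists_intermediateField_finrank_eq_prime K (E := E) (p := 2)
    ⟨finrank F E, by rw [← finrank_mul_finrank K F E, hF]⟩
  have hKL : finrank K L = finrank F E := finrank_eq_of_finrank_eq_two hF hL
  have hL_card : Nat.card L = Nat.card K ^ finrank F E := by
    rw [natCard_eq_pow_finrank (K := K) (V := L), hKL]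
  have hW := natCard_mul_natCard_units_mul_ncard_sep_trace_mul_ne_zero (K := K) (L := L)
    (S := {d : E | Algebra.trace K F (Algebra.norm F d) = 0})
    (fun c _ hd => trace_norm_smul_eq_zero hF (hKL ▸ hE) (c : L) hd) b
  have hV := natCard_add_one_mul_ncard_trace_norm_eq_zero_and_trace_mul_ne_zero hF hL hE hb
  simp only [Set.mem_ofPred_eq] at hW
  rw [← @Nat.cast_inj ℚ] at hW
  push_cast at hW
  rw [← Nat.cast_pow, ← hL_card]
  refine mul_left_cancel₀ (Nat.cast_ne_zero.2 Nat.card_pos.ne' : (Nat.card Lˣ : ℚ) ≠ 0) ?_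
  linear_combination (Nat.card K + 1 : ℚ) * hW + (Nat.card Kˣ * Nat.card L : ℚ) * hV

theorem natCard_mul_traceCodeWeight (hn : (Nat.card Kˣ).Coprime (finrank F E)) {a : K}
    (ha : a ≠ 0) {b : E} (hb : b ≠ 0) :
    (Nat.card K * Nat.card Kˣ : ℚ) * traceCodeWeight K (definingSet K F E a) b =
      Nat.card Kˣ * Nat.card E - Nat.card K *
        {d : E | Algebra.trace K F (Algebra.norm F d) = 0 ∧
          Algebra.trace K E (b * d) ≠ 0}.ncard := by
  have hD : Nat.card Kˣ * traceCodeWeight K (definingSet K F E a) b = _ :=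
    natCard_units_mul_ncard_definingSet_sep hn ha
      (S := {d : E | Algebra.trace K E (b * d) ≠ 0}) fun c d hd => by
        rw [Set.mem_ofPred_eq, Units.smul_def, mul_smul_comm, map_smul]
        exact smul_ne_zero c.ne_zero hd
  have hsplit := ncard_sep_add_ncard_sep_not {d : E | Algebra.trace K E (b * d) ≠ 0}
    fun d => Algebra.trace K F (Algebra.norm F d) = 0
  have hS := natCard_mul_ncard_trace_mul_ne_zero (K := K) hb
  simp only [Set.mem_ofPred_eq] at hD hsplit
  simp only [and_comm (b := Algebra.trace K E _ ≠ 0)]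
  rw [← hsplit, ← @Nat.cast_inj ℚ] at hS
  rw [← @Nat.cast_inj ℚ] at hD
  push_cast at hD hS
  linear_combination (Nat.card K : ℚ) * hD + hS

open Classical in
theorem natCard_mul_natCard_add_one_mul_traceCodeWeight (hF : finrank K F = 2)
    (hE : Odd (finrank F E)) (hn : (Nat.card Kˣ).Coprime (finrank F E)) {a : K} (ha : a ≠ 0)
    {b : E} (hb : b ≠ 0) :
    (Nat.card K : ℚ) * (Nat.card K + 1) * traceCodeWeight K (definingSet K F E a) b =
      Nat.card K * Nat.card E - Nat.card K ^ finrank F E + Nat.card K ^ finrank F E *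
        if Algebra.norm F b ∈ Set.range (algebraMap K F) then (Nat.card K : ℚ) + 1 else 0 := by
  have : Finite K := .of_injective _ (algebraMap K E).injective
  have hw := natCard_mul_traceCodeWeight hn ha hb
  have hW := ncard_trace_norm_eq_zero_and_trace_mul_ne_zero hF hE hb
  rw [natCard_eq_pow_finrank_sq_of_finrank_eq_two (E := E) hF, Nat.cast_pow, Nat.cast_pow] at hw ⊢
  refine mul_left_cancel₀ (Nat.cast_ne_zero.2 Nat.card_pos.ne' : (Nat.card Kˣ : ℚ) ≠ 0) ?_
  linear_combination (Nat.card K + 1 : ℚ) * hw - hW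

theorem traceCodeWeight_eq_iff_norm_mem_range (hF : finrank K F = 2) (hE : Odd (finrank F E))
    (hn : (Nat.card Kˣ).Coprime (finrank F E)) {a : K} (ha : a ≠ 0) {b : E} (hb : b ≠ 0) :
    (traceCodeWeight K (definingSet K F E a) b : ℚ) =
        (Nat.card E + (Nat.card K : ℚ) ^ finrank F E) / (Nat.card K + 1) ↔
      Algebra.norm F b ∈ Set.range (algebraMap K F) := by
  have : Finite K := .of_injective _ (algebraMap K E).injective
  have hq : (0 : ℚ) < Nat.card K := mod_cast Nat.card_pos
  have hw := natCard_mul_natCard_add_one_mul_traceCodeWeight hF hE hn ha hb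
  rw [eq_div_iff (by positivity)]
  split_ifs at hw with hbK
  · refine iff_of_true (mul_left_cancel₀ hq.ne' ?_) hbK
    linear_combination hw
  · refine iff_of_false (fun h => ?_) hbK
    have : (Nat.card K + 1 : ℚ) * Nat.card K ^ finrank F E = 0 := by
      linear_combination hw - (Nat.card K : ℚ) * h
    exact (by positivity : (Nat.card K + 1 : ℚ) * Nat.card K ^ finrank F E ≠ 0) this

theorem traceCodeWeight_eq_iff_norm_notMem_range (hF : finrank K F = 2) (hE : Odd (finrank F E))
    (hn : (Nat.card Kˣ).Coprime (finrank F E)) {a : K} (ha : a ≠ 0) {b : E} (hb : b ≠ 0) :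
    (traceCodeWeight K (definingSet K F E a) b : ℚ) =
        (Nat.card E - (Nat.card K : ℚ) ^ (finrank F E - 1)) / (Nat.card K + 1) ↔
      Algebra.norm F b ∉ Set.range (algebraMap K F) := by
  have : Finite K := .of_injective _ (algebraMap K E).injective
  have hq : (0 : ℚ) < Nat.card K := mod_cast Nat.card_pos
  have hl := pow_sub_one_mul hE.pos.ne' (Nat.card K : ℚ)
  have hw := natCard_mul_natCard_add_one_mul_traceCodeWeight hF hE hn ha hb
  rw [eq_div_iff (by positivity)]
  split_ifs at hw with hbK
  · refine iff_of_false (fun h => ?_) (not_not_intro hbK)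
    have : (Nat.card K + 1 : ℚ) * Nat.card K ^ finrank F E = 0 := by
      linear_combination (Nat.card K : ℚ) * h - hw - hl
    exact (by positivity : (Nat.card K + 1 : ℚ) * Nat.card K ^ finrank F E ≠ 0) this
  · refine iff_of_true (mul_left_cancel₀ hq.ne' ?_) hbK
    linear_combination hw + hl

theorem traceCodeWeight_eq_or_eq (hF : finrank K F = 2) (hE : Odd (finrank F E))
    (hn : (Nat.card Kˣ).Coprime (finrank F E)) {a : K} (ha : a ≠ 0) {b : E} (hb : b ≠ 0) :
    (traceCodeWeight K (definingSet K F E a) b : ℚ) =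
        (Nat.card E - (Nat.card K : ℚ) ^ (finrank F E - 1)) / (Nat.card K + 1) ∨
      (traceCodeWeight K (definingSet K F E a) b : ℚ) =
        (Nat.card E + (Nat.card K : ℚ) ^ finrank F E) / (Nat.card K + 1) := by
  rw [traceCodeWeight_eq_iff_norm_mem_range hF hE hn ha hb,
    traceCodeWeight_eq_iff_norm_notMem_range hF hE hn ha hb]
  exact (em _).symm

theorem le_traceCodeWeight (hF : finrank K F = 2) (hE : Odd (finrank F E))
    (hn : (Nat.card Kˣ).Coprime (finrank F E)) {a : K} (ha : a ≠ 0) {b : E} (hb : b ≠ 0) :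
    (Nat.card E - (Nat.card K : ℚ) ^ (finrank F E - 1)) / (Nat.card K + 1) ≤
      traceCodeWeight K (definingSet K F E a) b := by
  obtain h | h := traceCodeWeight_eq_or_eq hF hE hn ha hb
  · exact h.ge
  · rw [h, sub_eq_add_neg]
    gcongr
    exact (neg_nonpos.2 (by positivity)).trans (by positivity)

theorem traceCodeWeight_ne_zero (hF : finrank K F = 2) (hE : Odd (finrank F E))
    (hn : (Nat.card Kˣ).Coprime (finrank F E)) {a : K} (ha : a ≠ 0) {b : E} (hb : b ≠ 0) :
    traceCodeWeight K (definingSet K F E a) b ≠ 0 := by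
  have : Finite K := .of_injective _ (algebraMap K E).injective
  have hlt : (Nat.card K : ℚ) ^ (finrank F E - 1) < Nat.card E := by
    rw [natCard_eq_pow_finrank_sq_of_finrank_eq_two (E := E) hF, ← pow_mul, Nat.cast_pow]
    exact pow_lt_pow_right₀ (mod_cast Finite.one_lt_card) (by have := hE.pos; omega)
  have hpos : (0 : ℚ) < traceCodeWeight K (definingSet K F E a) b :=
    (div_pos (sub_pos.2 hlt) (by positivity)).trans_le (le_traceCodeWeight hF hE hn ha hb)
  exact (Nat.cast_pos.1 hpos).ne'

theorem ncard_traceCodeWeight_eq_add (hF : finrank K F = 2) (hE : Odd (finrank F E))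
    (hn : (Nat.card Kˣ).Coprime (finrank F E)) {a : K} (ha : a ≠ 0) :
    ({b : E | b ≠ 0 ∧ (traceCodeWeight K (definingSet K F E a) b : ℚ) =
        (Nat.card E + (Nat.card K : ℚ) ^ finrank F E) / (Nat.card K + 1)}.ncard : ℚ) =
      (Nat.card E - 1) / (Nat.card K + 1) := by
  have hset := Set.ext fun b : E => and_congr_right fun hb : b ≠ 0 =>
    traceCodeWeight_eq_iff_norm_mem_range hF hE hn ha hb
  have h := natCard_add_one_mul_ncard_norm_mem_range (E := E) hF
  rw [← @Nat.cast_inj ℚ, Nat.cast_mul, Nat.cast_add_one, natCast_natCard_units] at h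
  rw [hset, eq_div_iff (by positivity), mul_comm, h]

theorem ncard_traceCodeWeight_eq_sub (hF : finrank K F = 2) (hE : Odd (finrank F E))
    (hn : (Nat.card Kˣ).Coprime (finrank F E)) {a : K} (ha : a ≠ 0) :
    ({b : E | b ≠ 0 ∧ (traceCodeWeight K (definingSet K F E a) b : ℚ) =
        (Nat.card E - (Nat.card K : ℚ) ^ (finrank F E - 1)) / (Nat.card K + 1)}.ncard : ℚ) =
      Nat.card K * (Nat.card E - 1) / (Nat.card K + 1) := by
  have hset := Set.ext fun b : E => and_congr_right fun hb : b ≠ 0 =>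
    traceCodeWeight_eq_iff_norm_notMem_range hF hE hn ha hb
  have h := natCard_add_one_mul_ncard_norm_mem_range (E := E) hF
  have hsplit := ncard_sep_add_ncard_sep_not ({0}ᶜ : Set E)
    fun b => Algebra.norm F b ∈ Set.range (algebraMap K F)
  rw [Set.ncard_compl, Set.ncard_singleton, ← Nat.card_units] at hsplit
  simp only [Set.mem_compl_singleton_iff] at hsplit
  rw [← @Nat.cast_inj ℚ] at h hsplit
  push_cast [natCast_natCard_units] at h hsplit
  rw [hset, eq_div_iff (by positivity)]
  linear_combination (Nat.card K + 1 : ℚ) * hsplit - h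

end TraceCode

/-- **Theorem 2, `f = 2`, `k ≡ 2 (mod 4)`, `k > 2`.** Let `q` be a power
of a prime `p`, `k ≡ 2 (mod 4)`, `k > 2`, `gcd(k/2, q-1) = 1`, `a ∈ F_qˣ`, and
`D = {x ∈ F_{q^k} : Tr_{q²/q}(x^{(q^k-1)/(q²-1)}) + a = 0}`.  Then exactly
`q(q^k-1)/(q+1)` nonzero `b` give weight `(q^k - q^{k/2-1})/(q+1)` and exactly
`(q^k-1)/(q+1)` give weight `(q^k + q^{k/2})/(q+1)`; every nonzero codeword has one of
these two weights, `C_D` has length `q(q^k-1)/(q²-1)`, dimension `k`, and minimum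
distance `(q^k - q^{k/2-1})/(q+1)`. -/
theorem stmt17 (p e q k : ℕ) [Fact p.Prime] (he : 0 < e) (hq : q = p ^ e)
    (hk4 : k % 4 = 2) (hk2 : 2 < k) (hgcd : Nat.gcd (k / 2) (q - 1) = 1)
    (Fq Ff Fk : Type) [Field Fq] [Field Ff] [Field Fk]
    [Fintype Fq] [Fintype Ff] [Fintype Fk]
    [Algebra Fq Ff] [Algebra Ff Fk] [Algebra Fq Fk] [IsScalarTower Fq Ff Fk]
    (hcq : Fintype.card Fq = q) (hcf : Fintype.card Ff = q ^ 2)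
    (hck : Fintype.card Fk = q ^ k)
    (hnorm : ∀ x : Fk,
      algebraMap Ff Fk (Algebra.norm Ff x) = x ^ ((q ^ k - 1) / (q ^ 2 - 1)))
    (a : Fq) (ha : a ≠ 0) :
    (Nat.card {b : Fk // b ≠ 0 ∧
        (Nat.card {d : Fk // Algebra.trace Fq Ff (Algebra.norm Ff d) + a = 0 ∧
            Algebra.trace Fq Fk (b * d) ≠ 0} : ℚ)
          = ((q : ℚ) ^ k - (q : ℚ) ^ (k / 2 - 1)) / ((q : ℚ) + 1)} : ℚ)
      = (q : ℚ) * ((q : ℚ) ^ k - 1) / ((q : ℚ) + 1) ∧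
    (Nat.card {b : Fk // b ≠ 0 ∧
        (Nat.card {d : Fk // Algebra.trace Fq Ff (Algebra.norm Ff d) + a = 0 ∧
            Algebra.trace Fq Fk (b * d) ≠ 0} : ℚ)
          = ((q : ℚ) ^ k + (q : ℚ) ^ (k / 2)) / ((q : ℚ) + 1)} : ℚ)
      = ((q : ℚ) ^ k - 1) / ((q : ℚ) + 1) ∧
    (∀ b : Fk, b ≠ 0 →
      (Nat.card {d : Fk // Algebra.trace Fq Ff (Algebra.norm Ff d) + a = 0 ∧
          Algebra.trace Fq Fk (b * d) ≠ 0} : ℚ)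
          = ((q : ℚ) ^ k - (q : ℚ) ^ (k / 2 - 1)) / ((q : ℚ) + 1) ∨
      (Nat.card {d : Fk // Algebra.trace Fq Ff (Algebra.norm Ff d) + a = 0 ∧
          Algebra.trace Fq Fk (b * d) ≠ 0} : ℚ)
          = ((q : ℚ) ^ k + (q : ℚ) ^ (k / 2)) / ((q : ℚ) + 1)) ∧
    (Nat.card {x : Fk // Algebra.trace Fq Ff (Algebra.norm Ff x) + a = 0} : ℚ)
      = (q : ℚ) * ((q : ℚ) ^ k - 1) / ((q : ℚ) ^ 2 - 1) ∧
    Function.Injective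
      (fun (b : Fk)
          (d : {x : Fk // Algebra.trace Fq Ff (Algebra.norm Ff x) + a = 0}) =>
        Algebra.trace Fq Fk (b * (d : Fk))) ∧
    (∀ b : Fk, b ≠ 0 →
      ((q : ℚ) ^ k - (q : ℚ) ^ (k / 2 - 1)) / ((q : ℚ) + 1)
        ≤ (Nat.card {d : Fk // Algebra.trace Fq Ff (Algebra.norm Ff d) + a = 0 ∧
            Algebra.trace Fq Fk (b * d) ≠ 0} : ℚ)) := by
  have hq_card : Nat.card Fq = q := by rw [Nat.card_eq_fintype_card, hcq]
  have hqk : Nat.card Fk = q ^ k := by rw [Nat.card_eq_fintype_card, hck]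
  have hF : Module.finrank Fq Ff = 2 := finrank_eq_of_natCard_eq_natCard_pow <| by
    rw [Nat.card_eq_fintype_card, hcf, hq_card]
  have hE : Module.finrank Fq Fk = k := finrank_eq_of_natCard_eq_natCard_pow <| by
    rw [hqk, hq_card]
  have hk : Module.finrank Ff Fk = k / 2 := by
    rw [← Module.finrank_mul_finrank Fq Ff Fk, hF] at hE
    omega
  have hodd : Odd (Module.finrank Ff Fk) := by
    rw [hk, Nat.odd_iff]
    omega
  have hn : (Nat.card Fqˣ).Coprime (Module.finrank Ff Fk) := by
    rwa [hk, Nat.card_units, hq_card, Nat.coprime_comm]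
  rw [show (q : ℚ) ^ k = Nat.card Fk by rw [hqk, Nat.cast_pow], ← hk, ← hq_card]
  exact ⟨ncard_traceCodeWeight_eq_sub hF hodd hn ha, ncard_traceCodeWeight_eq_add hF hodd hn ha,
    fun b hb => traceCodeWeight_eq_or_eq hF hodd hn ha hb, ncard_definingSet hF hn ha,
    injective_trace_mul_of_traceCodeWeight_ne_zero
      fun b hb => traceCodeWeight_ne_zero hF hodd hn ha hb,
    fun b hb => le_traceCodeWeight hF hodd hn ha hb⟩
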